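/- Every instance 𝓘 of the oblivious knapsack problem in which all items have unit density admits a φ-robust universal policy, where φ = (1+√5)/2 is the golden ratio: there exists a permutation Π of the items of 𝓘 such that v(Opt(𝓘,C)) ≤ φ·v(Π(C)) for every capacity C with 0 ≤ C ≤ l(𝓘). -/

import Mathlib

/-!
The policy inserts the items in order of nondecreasing size, each one directly in front of the first
item that is smaller by a factor of at least `φ`, or at the end if there is none (`insertItem`). Two
properties of the resulting order (`GoldenOrder`) carry the proof:

* an item placed before `x` has size more than `l x / φ`;
* if `q` is placed before a strictly smaller item `x`, then some `z` with `φ * l z ≤ l q` lies after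
  `q` and is either `x` itself or lies before `x`.

Fix a capacity `C`, let `K` be the packed set and `S` a feasible set, and suppose `φ * l(K) < l(S)`.
Every item outside `K` is larger than `C - l(K) > C / φ²`, so `S \ K` has at most two elements. It
suffices to match the items of `S \ K` with distinct items of `K \ S`, the partner of `x`
being placed before `x`: the first property then yields `l(S) ≤ φ * l(K)`. An item `x` of `S \ K`
did not fit when it was scanned, although it fits together with the rest of `S`; hence some packed
item before `x` is outside `S`, which settles the case of one element. If two elements `x₁`, `x₂`
cannot be matched, both have the same single candidate `q`, and comparing sizes gives `l q > l x₁`.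
The item `z` provided by the second property is smaller than `C / φ²`, hence packed, hence in `S`
(it is not the only candidate `q`), and `l x₁ + l x₂ + l z > 2C/φ² + C/φ³ = C`, a contradiction.
-/

/-- The packing of a list of items (a universal policy) for capacity `C`:
scan the list in order, starting from the empty packing, and add an item
whenever its size fits into the remaining capacity. -/
def pack {α R : Type*} [LinearOrder R] [Sub R] (size : α → R) : R → List α → List α
  | _, [] => []
  | C, x :: xs => if size x ≤ C then x :: pack size (C - size x) xs else pack size C xs

/-- The golden ratio `φ = (1 + √5)/2`. -/
noncomputable def phi : ℝ := (1 + Real.sqrt 5) / 2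

section GoldenOrder

variable {α : Type*}

/-- The order invariant of the policy, for sizes `w` and a factor `c`: an item is less than `c` times
larger than any item before it, and between an item `q` and a strictly smaller later item `x`
(possibly at `x` itself) there is an item of size at most `w q / c`. Here `[z, x].Sublist B` encodes
that `z` precedes `x` in `B`. -/
def GoldenOrder (c : ℝ) (w : α → ℝ) : List α → Prop
  | [] => True
  | q :: B => GoldenOrder c w B ∧ (∀ b ∈ B, w b < c * w q) ∧
      ∀ x ∈ B, w x < w q → ∃ z, c * w z ≤ w q ∧ (z = x ∨ [z, x].Sublist B)

open Classical in
/-- Insert `x` in front of the first item that is smaller by a factor of at least `c`, or at the end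
if there is none. -/
noncomputable def insertItem (c : ℝ) (w : α → ℝ) (x : α) : List α → List α
  | [] => [x]
  | y :: ys => if c * w y ≤ w x then x :: y :: ys else y :: insertItem c w x ys

lemma insertItem_perm (c : ℝ) (w : α → ℝ) (x : α) (L : List α) :
    (insertItem c w x L).Perm (x :: L) := by
  induction L with
  | nil => simp [insertItem]
  | cons y ys ih =>
    unfold insertItem
    split_ifs
    · exact List.Perm.refl _
    · exact (ih.cons y).trans (List.Perm.swap x y ys)

lemma sublist_insertItem (c : ℝ) (w : α → ℝ) (x : α) (L : List α) :
    L.Sublist (insertItem c w x L) := by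
  induction L with
  | nil => simp
  | cons y ys ih =>
    unfold insertItem
    split_ifs
    · exact List.sublist_cons_self _ _
    · exact ih.cons_cons y

lemma GoldenOrder.insertItem {c : ℝ} (hc : 1 < c) {w : α → ℝ} {x : α} (hx : 0 < w x)
    {L : List α} (hL : GoldenOrder c w L) (hmax : ∀ y ∈ L, w y ≤ w x) :
    GoldenOrder c w (insertItem c w x L) := by
  induction L with
  | nil => simp [_root_.insertItem, GoldenOrder]
  | cons y ys ih =>
    obtain ⟨h1, h2, h3⟩ := hL
    unfold _root_.insertItem
    split_ifs with h
    · refine ⟨⟨h1, h2, h3⟩, fun b hb => ?_, fun b hb _ => ⟨y, h, ?_⟩⟩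
      · have := hmax b hb
        nlinarith
      · rcases List.mem_cons.1 hb with rfl | hb
        · exact Or.inl rfl
        · exact Or.inr ((List.singleton_sublist.2 hb).cons_cons y)
    · have hmem : ∀ b, b ∈ _root_.insertItem c w x ys → b = x ∨ b ∈ ys := fun b hb =>
        List.mem_cons.1 ((insertItem_perm c w x ys).mem_iff.1 hb)
      refine ⟨ih h1 fun b hb => hmax b (List.mem_cons_of_mem _ hb), fun b hb => ?_,
        fun b hb hlt => ?_⟩
      · rcases hmem b hb with rfl | hb
        · exact not_le.1 h
        · exact h2 b hb
      · rcases hmem b hb with rfl | hb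
        · exact absurd hlt (not_lt.2 (hmax y List.mem_cons_self))
        · obtain ⟨z, hz, hzx⟩ := h3 b hb hlt
          exact ⟨z, hz, hzx.imp_right fun hs => hs.trans (sublist_insertItem c w x ys)⟩

lemma exists_goldenOrder {c : ℝ} (hc : 1 < c) {w : α → ℝ} (hw : ∀ i, 0 < w i)
    (s : Finset α) : ∃ P : List α, P.Nodup ∧ (∀ i, i ∈ P ↔ i ∈ s) ∧ GoldenOrder c w P := by
  classical
  induction s using Finset.induction_on_max_value w with
  | empty => exact ⟨[], by simp [GoldenOrder]⟩
  | insert a s ha hmax ih =>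
    obtain ⟨P, hP, hmem, hG⟩ := ih
    have hp := insertItem_perm c w a P
    refine ⟨insertItem c w a P, ?_, fun i => ?_, hG.insertItem hc (hw a) ?_⟩
    · rw [hp.nodup_iff, List.nodup_cons, hmem]
      exact ⟨ha, hP⟩
    · rw [hp.mem_iff, List.mem_cons, hmem, Finset.mem_insert]
    · exact fun y hy => hmax y ((hmem y).1 hy)

lemma GoldenOrder.lt_of_before {c : ℝ} {w : α → ℝ} {P : List α} (hP : GoldenOrder c w P)
    {q x : α} (h : [q, x].Sublist P) : w x < c * w q := by
  induction P with
  | nil => simp at h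
  | cons y ys ih =>
    obtain ⟨h1, h2, -⟩ := hP
    cases h with
    | cons _ h => exact ih h1 h
    | cons_cons _ h => exact h2 x (List.singleton_sublist.1 h)

lemma GoldenOrder.exists_between {c : ℝ} {w : α → ℝ} {P : List α} (hP : GoldenOrder c w P)
    {q x : α} (h : [q, x].Sublist P) (hlt : w x < w q) :
    ∃ z, c * w z ≤ w q ∧ (z = x ∨ [z, x].Sublist P) := by
  induction P with
  | nil => simp at h
  | cons y ys ih =>
    obtain ⟨h1, -, h3⟩ := hP
    cases h with
    | cons _ h =>
      obtain ⟨z, hz, hzx⟩ := ih h1 h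
      exact ⟨z, hz, hzx.imp_right fun hs => hs.cons _⟩
    | cons_cons _ h =>
      obtain ⟨z, hz, hzx⟩ := h3 x (List.singleton_sublist.1 h) hlt
      exact ⟨z, hz, hzx.imp_right fun hs => hs.cons _⟩

end GoldenOrder

section Pack

variable {α : Type*}

lemma pack_sublist (l : α → ℚ) (C : ℚ) (P : List α) : (pack l C P).Sublist P := by
  induction P generalizing C with
  | nil => simp [pack]
  | cons y ys ih =>
    unfold pack
    split_ifs
    · exact (ih _).cons_cons y
    · exact (ih _).cons y

open Classical in
/-- An item that is not packed does not fit together with the packed items preceding it. -/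
lemma lt_of_notMem_pack {l : α → ℚ} (hl : ∀ i, 0 < l i) (C : ℚ) {P : List α} (hP : P.Nodup)
    {x : α} (hx : x ∈ P) (hxp : x ∉ pack l C P) :
    C < l x + ∑ q ∈ (pack l C P).toFinset with [q, x].Sublist P, l q := by
  induction P generalizing C with
  | nil => simp at hx
  | cons y ys ih =>
    obtain ⟨hy, hys⟩ := List.nodup_cons.1 hP
    unfold pack at hxp ⊢
    split_ifs at hxp ⊢ with h
    · have hxy : x ≠ y ∧ x ∉ pack l (C - l y) ys := by simpa using hxp
      have hx' : x ∈ ys := (List.mem_cons.1 hx).resolve_left hxy.1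
      have h1 := ih (C - l y) hys hx' hxy.2
      have hyn : y ∉ ((pack l (C - l y) ys).toFinset.filter fun q => [q, x].Sublist ys) := by
        intro hm
        simp only [Finset.mem_filter, List.mem_toFinset] at hm
        exact hy ((pack_sublist l _ ys).subset hm.1)
      have h2 : ∑ q ∈ insert y ((pack l (C - l y) ys).toFinset.filter
            fun q => [q, x].Sublist ys), l q
          ≤ ∑ q ∈ (y :: pack l (C - l y) ys).toFinset with [q, x].Sublist (y :: ys), l q := by
        refine Finset.sum_le_sum_of_subset_of_nonneg ?_ fun i _ _ => (hl i).le
        intro q hq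
        simp only [Finset.mem_insert, Finset.mem_filter, List.mem_toFinset, List.mem_cons] at hq ⊢
        rcases hq with rfl | ⟨hq, hs⟩
        · exact ⟨Or.inl rfl, (List.singleton_sublist.2 hx').cons_cons q⟩
        · exact ⟨Or.inr hq, hs.cons y⟩
      rw [Finset.sum_insert hyn] at h2
      linarith
    · rcases List.mem_cons.1 hx with rfl | hx'
      · have : 0 ≤ ∑ q ∈ (pack l C ys).toFinset with [q, x].Sublist (x :: ys), l q :=
          Finset.sum_nonneg fun i _ => (hl i).le
        linarith [not_le.1 h]
      · have h1 := ih C hys hx' hxp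
        refine h1.trans_le (add_le_add le_rfl ?_)
        refine Finset.sum_le_sum_of_subset_of_nonneg ?_ fun i _ _ => (hl i).le
        intro q hq
        simp only [Finset.mem_filter] at hq ⊢
        exact ⟨hq.1, hq.2.cons y⟩

end Pack

open Classical in
/-- The counting argument, for a packed set `K` and an arbitrary relation `before` having the
properties of a golden order; `hfit` says that an item outside `K` does not fit together with the
packed items before it. -/
lemma sum_le_of_goldenOrder {α : Type*} {c C : ℝ} (hc : 1 < c) (hc2 : c ^ 2 = c + 1) {w : α → ℝ}
    (hw : ∀ i, 0 < w i) {before : α → α → Prop} {K S : Finset α}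
    (hfit : ∀ x ∉ K, C < w x + ∑ q ∈ K with before q x, w q)
    (hlt : ∀ q x, before q x → w x < c * w q)
    (hbetween : ∀ q x, before q x → w x < w q → ∃ z, c * w z ≤ w q ∧ (z = x ∨ before z x))
    (hS : ∑ i ∈ S, w i ≤ C) : ∑ i ∈ S, w i ≤ c * ∑ i ∈ K, w i := by
  by_contra! hcon
  have hmono : ∀ {A B : Finset α}, A ⊆ B → ∑ i ∈ A, w i ≤ ∑ i ∈ B, w i := fun h =>
    Finset.sum_le_sum_of_subset_of_nonneg h fun i _ _ => (hw i).le
  have hpos : ∀ A : Finset α, 0 ≤ ∑ i ∈ A, w i := fun A => Finset.sum_nonneg fun i _ => (hw i).le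
  have hsplit : ∑ i ∈ S, w i = ∑ i ∈ S ∩ K, w i + ∑ i ∈ S \ K, w i :=
    (Finset.sum_inter_add_sum_sdiff S K w).symm
  have hC : 0 ≤ C := (hpos S).trans hS
  -- Items outside `K` exceed `C / c²`.
  have hbig : ∀ x ∉ K, C < c ^ 2 * w x := by
    intro x hx
    have h1 := hfit x hx
    have h2 : ∑ q ∈ K with before q x, w q ≤ ∑ i ∈ K, w i := hmono (Finset.filter_subset _ _)
    have h3 : c * ∑ i ∈ K, w i < C := hcon.trans_le hS
    rw [hc2]
    nlinarith
  -- Replacing `S \ K` by a set `T ⊆ K \ S` loses more than a factor `c`.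
  have hT : ∀ T : Finset α, T ⊆ K \ S → c * ∑ i ∈ T, w i < ∑ i ∈ S \ K, w i := by
    intro T hTK
    have hdisj : Disjoint (S ∩ K) T := by
      rw [Finset.disjoint_left]
      intro a ha ha'
      exact (Finset.mem_sdiff.1 (hTK ha')).2 (Finset.mem_inter.1 ha).1
    have h1 : ∑ i ∈ (S ∩ K) ∪ T, w i ≤ ∑ i ∈ K, w i :=
      hmono (Finset.union_subset Finset.inter_subset_right (hTK.trans Finset.sdiff_subset))
    rw [Finset.sum_union hdisj] at h1
    have h2 := hpos (S ∩ K)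
    nlinarith
  -- Items of `K` that precede `x` and are not in `S` outweigh the rest of `S \ K`.
  have hcand : ∀ x ∈ S \ K, ∑ i ∈ S \ K, w i - w x <
      ∑ q ∈ (K.filter fun q => before q x) \ S, w q := by
    intro x hx
    have h1 := hfit x (Finset.mem_sdiff.1 hx).2
    have h2 := Finset.sum_inter_add_sum_sdiff (K.filter fun q => before q x) S w
    have h3 : ∑ i ∈ (K.filter fun q => before q x) ∩ S, w i ≤ ∑ i ∈ S ∩ K, w i := by
      refine hmono fun i hi => ?_
      simp only [Finset.mem_inter, Finset.mem_filter] at hi ⊢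
      exact ⟨hi.2, hi.1.1⟩
    linarith
  have hex : ∀ x ∈ S \ K, ∃ q, (q ∈ K ∧ q ∉ S) ∧ before q x := by
    intro x hx
    have h1 := hcand x hx
    have h2 : w x ≤ ∑ i ∈ S \ K, w i := Finset.single_le_sum (fun i _ => (hw i).le) hx
    obtain ⟨q, hq⟩ : ((K.filter fun q => before q x) \ S).Nonempty := by
      rw [Finset.nonempty_iff_ne_empty]
      intro h
      rw [h, Finset.sum_empty] at h1
      linarith
    simp only [Finset.mem_sdiff, Finset.mem_filter] at hq
    exact ⟨q, ⟨hq.1.1, hq.2⟩, hq.1.2⟩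
  have hle : ∑ i ∈ S \ K, w i ≤ C := (hmono Finset.sdiff_subset).trans hS
  have hcard : (S \ K).card ≤ 2 := by
    by_contra! h
    obtain ⟨t, ht, htc⟩ := Finset.exists_subset_card_eq (show 3 ≤ (S \ K).card from h)
    obtain ⟨a, b, d, hab, had, hbd, rfl⟩ := Finset.card_eq_three.1 htc
    have h1 := hmono ht
    rw [Finset.sum_insert (by simp [hab, had]), Finset.sum_pair hbd] at h1
    have ha := hbig a (Finset.mem_sdiff.1 (ht (by simp))).2
    have hb := hbig b (Finset.mem_sdiff.1 (ht (by simp))).2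
    have hd := hbig d (Finset.mem_sdiff.1 (ht (by simp))).2
    have h2 : c ^ 2 * (w a + w b + w d) ≤ c ^ 2 * C :=
      mul_le_mul_of_nonneg_left (by linarith) (by positivity)
    have h3 : c < 2 := by nlinarith
    nlinarith
  obtain h0 | h1 | h2 : (S \ K).card = 0 ∨ (S \ K).card = 1 ∨ (S \ K).card = 2 := by omega
  · have := hT ∅ (by simp)
    rw [Finset.card_eq_zero.1 h0] at this
    simp at this
  · obtain ⟨x, hx⟩ := Finset.card_eq_one.1 h1
    obtain ⟨q, hq, hqx⟩ := hex x (by simp [hx])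
    have := hT {q} (by simpa using hq)
    rw [hx, Finset.sum_singleton, Finset.sum_singleton] at this
    linarith [hlt q x hqx]
  · obtain ⟨x, y, hxy, hM⟩ := Finset.card_eq_two.1 h2
    have hxM : x ∈ S \ K := by simp [hM]
    have hyM : y ∈ S \ K := by simp [hM]
    have hsum : ∑ i ∈ S \ K, w i = w x + w y := by rw [hM, Finset.sum_pair hxy]
    -- `x` and `y` cannot be matched with distinct items.
    have huniq : ∀ p q, (p ∈ K ∧ p ∉ S) → (q ∈ K ∧ q ∉ S) → before p x → before q y → p = q := by
      intro p q hp hq hpx hqy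
      by_contra hpq
      have := hT {p, q} (by
        intro i hi
        rcases Finset.mem_insert.1 hi with rfl | hi
        · exact Finset.mem_sdiff.2 hp
        · rw [Finset.mem_singleton.1 hi]
          exact Finset.mem_sdiff.2 hq)
      rw [Finset.sum_pair hpq, hsum] at this
      linarith [hlt p x hpx, hlt q y hqy]
    obtain ⟨q, hq, hqx⟩ := hex x hxM
    obtain ⟨q', hq', hqy⟩ := hex y hyM
    obtain rfl := huniq q q' hq hq' hqx hqy
    have hqw : w x < w q := by
      have h3 := hcand y hyM
      have h4 : ∑ p ∈ (K.filter fun p => before p y) \ S, w p ≤ ∑ p ∈ {q}, w p := by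
        refine hmono fun p hp => ?_
        simp only [Finset.mem_sdiff, Finset.mem_filter] at hp
        rw [Finset.mem_singleton]
        exact (huniq q p hq ⟨hp.1.1, hp.2⟩ hqx hp.1.2).symm
      rw [Finset.sum_singleton] at h4
      linarith
    obtain ⟨z, hz, hzx⟩ := hbetween q x hqx hqw
    have hqK : w q ≤ ∑ i ∈ K, w i := Finset.single_le_sum (fun i _ => (hw i).le) hq.1
    -- `z` is smaller than `C / c²`, hence packed.
    have hzK : z ∈ K := by
      by_contra hzK
      have h3 := hbig z hzK
      have h4 : c * (c * w z) ≤ c * ∑ i ∈ K, w i :=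
        mul_le_mul_of_nonneg_left (hz.trans hqK) (by linarith)
      nlinarith
    have hxK := (Finset.mem_sdiff.1 hxM).2
    have hyK := (Finset.mem_sdiff.1 hyM).2
    have hzbx : before z x := hzx.resolve_left fun h => hxK (h ▸ hzK)
    have hzS : z ∈ S := by
      by_contra hzS
      have h3 : z = q := huniq z q ⟨hzK, hzS⟩ hq hzbx hqy
      rw [h3] at hz
      nlinarith [hw q]
    have h3 : w z ≤ ∑ i ∈ S ∩ K, w i :=
      Finset.single_le_sum (fun i _ => (hw i).le) (Finset.mem_inter.2 ⟨hzS, hzK⟩)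
    have h4 := hbig x hxK
    have h5 := hbig y hyK
    have h6 := hlt z x hzbx
    have h7 : w x + w y + w z ≤ C := by linarith
    -- `2 / c² + 1 / c³ = 1`, cleared of denominators.
    have h8 : c ^ 3 = 2 * c + 1 := by linear_combination (c + 1) * hc2
    have h9 : c ^ 3 * (w x + w y + w z) ≤ c ^ 3 * C :=
      mul_le_mul_of_nonneg_left h7 (by positivity)
    have h10 : c * C < c ^ 3 * w x := by nlinarith
    have h11 : c * C < c ^ 3 * w y := by nlinarith
    have h12 : C < c ^ 3 * w z := by nlinarith
    nlinarith

/-- Every unit-density instance of the oblivious knapsack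
problem admits a `φ`-robust universal policy: there is a permutation `P` of the
items such that for every capacity `0 ≤ C ≤ l(𝓘)` and every feasible set `S`
(in particular the optimal one), `v(S) ≤ φ · v(P(C))`. -/
theorem exists_phi_robust_universal_policy_unit_density {n : ℕ}
    (v l : Fin n → ℚ) (hv : ∀ i, 0 ≤ v i) (hl : ∀ i, 0 < l i)
    (hud : ∀ i, v i = l i) :
    ∃ P : List (Fin n), P.Nodup ∧ (∀ i, i ∈ P) ∧
      ∀ C : ℚ, 0 ≤ C → C ≤ ∑ i, l i →
        ∀ S : Finset (Fin n), ∑ i ∈ S, l i ≤ C →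
          ((∑ i ∈ S, v i : ℚ) : ℝ) ≤ phi * ((((pack l C P).map v).sum : ℚ) : ℝ) := by
  classical
  have hphi : phi = Real.goldenRatio := rfl
  have hc : (1 : ℝ) < phi := hphi ▸ Real.one_lt_goldenRatio
  have hc2 : phi ^ 2 = phi + 1 := hphi ▸ Real.goldenRatio_sq
  obtain rfl : v = l := funext hud
  have hw : ∀ i, (0 : ℝ) < (v i : ℝ) := fun i => by exact_mod_cast hl i
  obtain ⟨P, hP, hmem, hG⟩ := exists_goldenOrder hc hw Finset.univ
  have hall : ∀ i, i ∈ P := fun i => (hmem i).2 (Finset.mem_univ i)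
  refine ⟨P, hP, hall, fun C _ _ S hS => ?_⟩
  have hnd : (pack v C P).Nodup := hP.sublist (pack_sublist v C P)
  rw [← List.sum_toFinset v hnd]
  push_cast
  refine sum_le_of_goldenOrder (C := (C : ℝ)) (before := fun q x => [q, x].Sublist P) hc hc2 hw
    (fun x hx => ?_) (fun q x h => hG.lt_of_before h) (fun q x h => hG.exists_between h) ?_
  · have h := (Rat.cast_lt (K := ℝ)).2
      (lt_of_notMem_pack hl C hP (hall x) (by simpa using hx))
    rw [Rat.cast_add, Rat.cast_sum] at h
    exact h.trans_le (le_of_eq (by congr!))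
  · exact_mod_cast hS
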